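/- arXiv:2310.09889 — 4 statements merged into one kernel-verified Lean document; each statement's English description precedes it below -/
import Mathlib

section
/- For every S-element subset V of [K] and every k ∈ [K] \ V, letting n denote the number of elements of V that are smaller than k, the identity a_V = Σ_{i=n+1}^{S} (−1)^{i−n−1} · a_{(V \ {V(i)}) ∪ {k}} + Σ_{i=1}^{n} (−1)^{n+i} · a_{(V \ {V(i)}) ∪ {k}} holds. -/
/-- The `i`-th smallest element (1-indexed) of a finite set of naturals,
i.e. `V(i)` for a finite set `V` of integers. -/
def nthSmallest (V : Finset ℕ) (i : ℕ) : ℕ :=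
  (V.sort (· ≤ ·)).getD (i - 1) 0

/-!
View `a` as a simplicial cochain and let `δ` be the coboundary, the alternating sum over facets.
Up to sign, `(δ a) (V ∪ {k})` is `a_V` minus the sum of the signed values at the sets obtained from
`V` by exchanging an element for `k`, and these signs are those of the theorem. So the hypothesis
says that `δ a` vanishes on the `(S + 1)`-subsets containing `1`, and the claim is that it
vanishes on all of them. For `1 ∉ W`, the identity `δ (δ a) = 0`, read at `W ∪ {1}`, writes
`(δ a) W` in terms of values of `δ a` at sets that contain `1`.
-/

section Rank

variable {α : Type*} [LinearOrder α] {V W : Finset α} {v w k : α}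

/-- The rank of `v` relative to `V`: the number of elements of `V` smaller than `v`, where `v`
itself may or may not belong to `V`. -/
def rankIn (V : Finset α) (v : α) : ℕ := (V.filter (· < v)).card

lemma rankIn_mono (V : Finset α) : Monotone (rankIn V) := fun _ _ h =>
  Finset.card_le_card (Finset.monotone_filter_right V fun _ _ hx => hx.trans_le h)

lemma rankIn_insert_self (V : Finset α) (k : α) : rankIn (insert k V) k = rankIn V k := by
  rw [rankIn, Finset.filter_insert, if_neg (lt_irrefl k), rankIn]

lemma rankIn_erase_of_le (V : Finset α) (h : w ≤ v) : rankIn (V.erase v) w = rankIn V w := by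
  rw [rankIn, Finset.filter_erase, Finset.erase_eq_of_notMem (by simp [h]), rankIn]

lemma rankIn_erase_add_one (hv : v ∈ V) (h : v < w) : rankIn (V.erase v) w + 1 = rankIn V w := by
  rw [rankIn, Finset.filter_erase, Finset.card_erase_add_one (by simp [hv, h]), rankIn]

lemma rankIn_lt_rankIn_iff (hv : v ∈ V) : rankIn V v < rankIn V k ↔ v < k := by
  refine ⟨(rankIn_mono V).reflect_lt, fun h => ?_⟩
  rw [← rankIn_erase_add_one hv h, Nat.lt_succ_iff, ← rankIn_erase_of_le V le_rfl]
  exact rankIn_mono _ h.le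

lemma rankIn_eq_zero_of_forall_le (h : ∀ v ∈ V, k ≤ v) : rankIn V k = 0 := by
  rw [rankIn, Finset.card_eq_zero, Finset.filter_eq_empty_iff]
  exact fun v hv => (h v hv).not_gt

lemma neg_one_pow_rankIn_erase_comm {R : Type*} [Ring R] (hv : v ∈ W) (hw : w ∈ W) (hvw : v ≠ w) :
    (-1 : R) ^ (rankIn W v + rankIn (W.erase v) w) =
      -(-1) ^ (rankIn W w + rankIn (W.erase w) v) := by
  wlog h : v < w generalizing v w
  · rw [this hw hv hvw.symm (hvw.lt_or_gt.resolve_left h), neg_neg]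
  rw [← rankIn_erase_add_one hv h, rankIn_erase_of_le W h.le, add_right_comm, pow_succ,
    mul_neg_one, neg_neg, add_comm]

lemma rankIn_orderEmbOfFin (V : Finset α) (j : Fin V.card) :
    rankIn V (V.orderEmbOfFin rfl j) = j := by
  rw [rankIn, ← congrArg (Finset.filter (· < V.orderEmbOfFin rfl j)) (V.map_orderEmbOfFin_univ rfl),
    Finset.filter_map, Finset.card_map, ← Fin.card_Iio j]
  congr 1
  ext i
  simp

end Rank

section Coboundary

variable {α : Type*} [LinearOrder α] (R : Type*) [Ring R] {M : Type*} [AddCommGroup M] [Module R M]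

/-- The simplicial coboundary of a cochain `a` with values in `M`, where the finite set `W` is the
simplex whose vertices are listed in increasing order. The cochain is a function on sets of all
sizes, so that no degree has to be carried along. -/
def coboundary (a : Finset α → M) (W : Finset α) : M :=
  ∑ w ∈ W, (-1 : R) ^ rankIn W w • a (W.erase w)

/-- The signed sum of the values of `a` at the sets `(V \ {v}) ∪ {k}` for `v ∈ V`, meant for
`k ∉ V`. The sign is that of removing `v` and then adding `k`, and equals `(-1) ^ d` for `d` the
number of elements of `V` strictly between `v` and `k`. -/
def exchangeSum (a : Finset α → M) (V : Finset α) (k : α) : M :=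
  ∑ v ∈ V, (-1 : R) ^ (rankIn V v + rankIn (V.erase v) k) • a (insert k (V.erase v))

variable {R}

lemma coboundary_insert (a : Finset α → M) {V : Finset α} {k : α} (hk : k ∉ V) :
    coboundary R a (insert k V) = (-1 : R) ^ rankIn V k • (a V - exchangeSum R a V k) := by
  have hterm : ∀ v ∈ V, (-1 : R) ^ rankIn (insert k V) v • a ((insert k V).erase v) =
      -((-1 : R) ^ rankIn V k •
        (-1 : R) ^ (rankIn V v + rankIn (V.erase v) k) • a (insert k (V.erase v))) := by
    intro v hv
    have hkv : k ≠ v := fun h => hk (h ▸ hv)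
    have hswap := neg_one_pow_rankIn_erase_comm (R := R) (Finset.mem_insert_self k V)
      (Finset.mem_insert_of_mem hv) hkv
    rw [Finset.erase_insert hk, Finset.erase_insert_of_ne hkv, rankIn_insert_self,
      rankIn_insert_self] at hswap
    have hsign : (-1 : R) ^ rankIn (insert k V) v =
        -((-1) ^ rankIn V k * (-1) ^ (rankIn V v + rankIn (V.erase v) k)) := by
      rw [← pow_add, ← add_assoc, pow_add, hswap, neg_mul, neg_neg, ← pow_add, add_assoc, pow_add,
        Even.neg_one_pow ⟨_, rfl⟩, mul_one]
    rw [Finset.erase_insert_of_ne hkv, hsign, neg_smul, mul_smul]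
  rw [coboundary, Finset.sum_insert hk, rankIn_insert_self, Finset.erase_insert hk,
    Finset.sum_congr rfl hterm, Finset.sum_neg_distrib, ← Finset.smul_sum, ← sub_eq_add_neg,
    ← smul_sub, exchangeSum]

lemma coboundary_insert_eq_zero_iff {a : Finset α → M} {V : Finset α} {k : α} (hk : k ∉ V) :
    coboundary R a (insert k V) = 0 ↔ a V = exchangeSum R a V k := by
  rw [coboundary_insert a hk, (isUnit_one.neg.pow _).smul_eq_zero, sub_eq_zero]

lemma coboundary_coboundary (a : Finset α → M) (W : Finset α) :
    coboundary R (coboundary R a) W = 0 := by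
  simp_rw [coboundary, Finset.smul_sum, smul_smul, ← pow_add]
  rw [Finset.sum_sigma']
  refine Finset.sum_involution (fun p _ => ⟨p.2, p.1⟩) ?_ ?_ ?_ fun _ _ => rfl
  all_goals
    rintro ⟨w, v⟩ hp
    obtain ⟨hw, hvw, hv⟩ : w ∈ W ∧ v ≠ w ∧ v ∈ W := by simpa using hp
  · rw [neg_one_pow_rankIn_erase_comm hw hv hvw.symm, Finset.erase_right_comm, neg_smul,
      neg_add_cancel]
  · exact fun _ h => hvw (congrArg Sigma.fst h)
  · simp [hw, hv, hvw.symm]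

lemma coboundary_eq_zero_of_forall_insert {a : Finset α → M} {W : Finset α} {m : α} (hm : m ∉ W)
    (h : ∀ w ∈ W, coboundary R a (insert m (W.erase w)) = 0) : coboundary R a W = 0 := by
  rw [(coboundary_insert_eq_zero_iff (R := R) hm).1 (coboundary_coboundary a _)]
  exact Finset.sum_eq_zero fun w hw => by rw [h w hw, smul_zero]

theorem crucial_transform_general {a : Finset α → M} {X : Finset α} {S : ℕ} {m : α}
    (ha : ∀ V ⊆ X, V.card = S → m ∉ V → a V = exchangeSum R a V m)
    {V : Finset α} (hV : V ⊆ X) (hVcard : V.card = S) {k : α} (hk : k ∈ X) (hkV : k ∉ V) :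
    a V = exchangeSum R a V k := by
  have hfacet : ∀ w ∈ insert k V, m ∉ (insert k V).erase w →
      coboundary R a (insert m ((insert k V).erase w)) = 0 := by
    refine fun w hw hm => (coboundary_insert_eq_zero_iff hm).2 (ha _ ?_ ?_ hm)
    · exact (Finset.erase_subset w _).trans (Finset.insert_subset hk hV)
    · rw [Finset.card_erase_of_mem hw, Finset.card_insert_of_notMem hkV, hVcard,
        Nat.add_sub_cancel]
  rw [← coboundary_insert_eq_zero_iff hkV]
  by_cases hm : m ∈ insert k V
  · rw [← Finset.insert_erase hm]
    exact hfacet m hm (Finset.notMem_erase m _)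
  · exact coboundary_eq_zero_of_forall_insert hm fun w hw =>
      hfacet w hw fun h => hm (Finset.mem_of_mem_erase h)

end Coboundary

section NthSmallest

variable {V : Finset ℕ}

lemma nthSmallest_add_one (V : Finset ℕ) (j : Fin V.card) :
    nthSmallest V (j + 1) = V.orderEmbOfFin rfl j := by
  simp [nthSmallest, Finset.orderEmbOfFin_apply]

lemma sum_nthSmallest {M : Type*} [AddCommMonoid M] (V : Finset ℕ) (f : ℕ → M) :
    ∑ i ∈ Finset.Icc 1 V.card, f (nthSmallest V i) = ∑ v ∈ V, f v := by
  conv_rhs => rw [← V.map_orderEmbOfFin_univ rfl, Finset.sum_map]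
  simp only [RelEmbedding.coe_toEmbedding, ← nthSmallest_add_one]
  rw [Fin.sum_univ_eq_sum_range fun j => f (nthSmallest V (j + 1)), Finset.range_eq_Ico,
    Finset.sum_Ico_add' (fun i => f (nthSmallest V i)), zero_add, Finset.Ico_add_one_right_eq_Icc]

lemma nthSmallest_mem {i : ℕ} (hi : i ∈ Finset.Icc 1 V.card) : nthSmallest V i ∈ V := by
  obtain ⟨hpos, hcard⟩ := Finset.mem_Icc.1 hi
  obtain ⟨j, rfl⟩ := Nat.exists_eq_add_of_le' hpos
  rw [nthSmallest_add_one V ⟨j, hcard⟩]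
  exact V.orderEmbOfFin_mem rfl _

lemma rankIn_nthSmallest_add_one {i : ℕ} (hi : i ∈ Finset.Icc 1 V.card) :
    rankIn V (nthSmallest V i) + 1 = i := by
  obtain ⟨hpos, hcard⟩ := Finset.mem_Icc.1 hi
  obtain ⟨j, rfl⟩ := Nat.exists_eq_add_of_le' hpos
  rw [nthSmallest_add_one V ⟨j, hcard⟩, rankIn_orderEmbOfFin]

lemma nthSmallest_lt_iff {i k : ℕ} (hi : i ∈ Finset.Icc 1 V.card) :
    nthSmallest V i < k ↔ i ≤ rankIn V k := by
  rw [← rankIn_lt_rankIn_iff (nthSmallest_mem hi), ← Nat.add_one_le_iff,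
    rankIn_nthSmallest_add_one hi]

variable {R : Type*} [Ring R] {M : Type*} [AddCommGroup M] [Module R M]

lemma exchangeSum_eq_sum_nthSmallest (a : Finset ℕ → M) (V : Finset ℕ) (k : ℕ) :
    exchangeSum R a V k =
      (∑ i ∈ Finset.Icc (rankIn V k + 1) V.card,
        (-1 : R) ^ (i - rankIn V k - 1) • a (insert k (V.erase (nthSmallest V i)))) +
      ∑ i ∈ Finset.Icc 1 (rankIn V k),
        (-1 : R) ^ (rankIn V k + i) • a (insert k (V.erase (nthSmallest V i))) := by
  set n := rankIn V k
  have hn : n ≤ V.card := Finset.card_filter_le V _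
  have hupper : ∀ i ∈ Finset.Icc (n + 1) V.card,
      (-1 : R) ^ (rankIn V (nthSmallest V i) + rankIn (V.erase (nthSmallest V i)) k) =
        (-1) ^ (i - n - 1) := by
    intro i hi
    have hiV : i ∈ Finset.Icc 1 V.card := Finset.Icc_subset_Icc_left n.succ_pos hi
    have hni : n < i := (Finset.mem_Icc.1 hi).1
    have hle : k ≤ nthSmallest V i := not_lt.1 ((nthSmallest_lt_iff hiV).not.2 hni.not_ge)
    have hrank := rankIn_nthSmallest_add_one hiV
    rw [rankIn_erase_of_le V hle]
    exact neg_one_pow_congr (by grind)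
  have hlower : ∀ i ∈ Finset.Icc 1 n,
      (-1 : R) ^ (rankIn V (nthSmallest V i) + rankIn (V.erase (nthSmallest V i)) k) =
        (-1) ^ (n + i) := by
    intro i hi
    have hiV : i ∈ Finset.Icc 1 V.card := Finset.Icc_subset_Icc_right hn hi
    have hlt : nthSmallest V i < k := (nthSmallest_lt_iff hiV).2 (Finset.mem_Icc.1 hi).2
    have hrank := rankIn_nthSmallest_add_one hiV
    have hrank_erase := rankIn_erase_add_one (nthSmallest_mem hiV) hlt
    exact neg_one_pow_congr (by grind)
  rw [exchangeSum, ← sum_nthSmallest V, add_comm, ← zero_add 1, Finset.Icc_add_one_left_eq_Ioc,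
    ← Finset.sum_Ioc_consecutive _ n.zero_le hn]
  simp only [← Finset.Icc_add_one_left_eq_Ioc]
  congr 1
  · exact Finset.sum_congr rfl fun i hi => by rw [hlower i hi]
  · exact Finset.sum_congr rfl fun i hi => by rw [hupper i hi]

lemma exchangeSum_eq_sum_nthSmallest_of_forall_le (a : Finset ℕ → M) {k : ℕ}
    (hk : ∀ v ∈ V, k ≤ v) :
    exchangeSum R a V k = ∑ i ∈ Finset.Icc 1 V.card,
      (-1 : R) ^ (i - 1) • a (insert k (V.erase (nthSmallest V i))) := by
  simp [exchangeSum_eq_sum_nthSmallest, rankIn_eq_zero_of_forall_le hk]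

end NthSmallest

/-- Lemma 1 (crucial transform): for every `S`-element subset `V` of `[K]` and every
`k ∈ [K] \ V`, writing `n` for the number of elements of `V` smaller than `k`,
`a_V = Σ_{i=n+1}^{S} (−1)^{i−n−1} a_{(V\{V(i)})∪{k}} + Σ_{i=1}^{n} (−1)^{n+i} a_{(V\{V(i)})∪{k}}`. -/
theorem crucial_transform
    (K S : ℕ) (hS : 2 ≤ S) (hSK : S ≤ K)
    (F : Type*) [Field F] (M : Type*) [AddCommGroup M] [Module F M]
    (a : Finset ℕ → M)
    (ha : ∀ V : Finset ℕ, V ⊆ Finset.Icc 2 K → V.card = S →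
      a V = ∑ i ∈ Finset.Icc 1 S,
        ((-1 : F) ^ (i - 1)) • a (insert 1 (V.erase (nthSmallest V i))))
    (V : Finset ℕ) (hV : V ⊆ Finset.Icc 1 K) (hVcard : V.card = S)
    (k : ℕ) (hk : k ∈ Finset.Icc 1 K) (hkV : k ∉ V) :
    a V =
      (∑ i ∈ Finset.Icc ((V.filter (· < k)).card + 1) S,
        ((-1 : F) ^ (i - (V.filter (· < k)).card - 1)) •
          a (insert k (V.erase (nthSmallest V i)))) +
      (∑ i ∈ Finset.Icc 1 (V.filter (· < k)).card,
        ((-1 : F) ^ ((V.filter (· < k)).card + i)) •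
          a (insert k (V.erase (nthSmallest V i)))) := by
  refine (crucial_transform_general (R := F) (m := 1) (fun U hU hUcard h1 => ?_) hV hVcard hk
    hkV).trans (hVcard ▸ exchangeSum_eq_sum_nthSmallest a V k)
  rw [ha U (by grind) hUcard, exchangeSum_eq_sum_nthSmallest_of_forall_le a (by grind), hUcard]
end

section
/- Let K, S, U be natural numbers with K ≥ S ≥ 2 and U ≥ 1. Then U · C(K−2, S−2) + C(K−1−U, S−1) ≥ C(K−1, S−1); equivalently, U · C(K−2, S−2) ≥ C(K−1, S−1) − C(K−1−U, S−1). -/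
/-! Sort the `(r + 1)`-subsets of `{0, …, n}` by their largest element `i`: there are `C(i, r)` of
them. Those with `i < m` number `C(m, r + 1)`, and each of the remaining `n + 1 - m` values of `i`
contributes at most `C(n, r)`. -/

open Finset in
theorem choose_succ_eq_choose_add_sum_Ico {m n : ℕ} (hmn : m ≤ n) (r : ℕ) :
    n.choose (r + 1) = m.choose (r + 1) + ∑ i ∈ Ico m n, i.choose r := by
  induction n, hmn using Nat.le_induction with
  | base => simp
  | succ n hmn ih =>
    rw [sum_Ico_succ_top hmn, ← add_assoc, ← ih, Nat.choose_succ_succ', add_comm]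

open Finset in
theorem sum_Ico_choose_le_mul_choose (m n r : ℕ) :
    ∑ i ∈ Ico m (n + 1), i.choose r ≤ (n + 1 - m) * n.choose r := by
  have choose_le : ∀ i ∈ Ico m (n + 1), i.choose r ≤ n.choose r := fun i hi ↦
    Nat.choose_le_choose r (Nat.le_of_lt_succ (mem_Ico.mp hi).2)
  simpa only [Nat.card_Ico, smul_eq_mul] using sum_le_card_nsmul _ _ _ choose_le

theorem choose_succ_le_mul_choose_add_choose_sub (n r U : ℕ) :
    (n + 1).choose (r + 1) ≤ U * n.choose r + (n + 1 - U).choose (r + 1) :=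
  calc (n + 1).choose (r + 1)
    _ = (n + 1 - U).choose (r + 1) + ∑ i ∈ Finset.Ico (n + 1 - U) (n + 1), i.choose r :=
      choose_succ_eq_choose_add_sum_Ico (Nat.sub_le _ _) r
    _ ≤ (n + 1 - U).choose (r + 1) + (n + 1 - (n + 1 - U)) * n.choose r := by
      gcongr
      exact sum_Ico_choose_le_mul_choose _ n r
    _ ≤ (n + 1 - U).choose (r + 1) + U * n.choose r := by
      gcongr
      exact tsub_tsub_le
    _ = U * n.choose r + (n + 1 - U).choose (r + 1) := add_comm _ _

/-- `U·C(K−2, S−2) + C(K−1−U, S−1) ≥ C(K−1, S−1)`; equivalently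
`U·C(K−2, S−2) ≥ C(K−1, S−1) − C(K−1−U, S−1)` (truncated subtraction). -/
theorem enough_space (K S U : ℕ) (hSK : S ≤ K) (hS : 2 ≤ S) (hU : 1 ≤ U) :
    (K - 1).choose (S - 1) ≤ U * (K - 2).choose (S - 2) + (K - 1 - U).choose (S - 1) ∧
    (K - 1).choose (S - 1) - (K - 1 - U).choose (S - 1) ≤ U * (K - 2).choose (S - 2) := by
  obtain ⟨r, rfl⟩ := Nat.exists_eq_add_of_le' hS
  obtain ⟨n, rfl⟩ := Nat.exists_eq_add_of_le' (hS.trans hSK)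
  have choose_le := choose_succ_le_mul_choose_add_choose_sub n r U
  exact ⟨choose_le, Nat.sub_le_iff_le_add.mpr choose_le⟩
end

section
/- Let K, S, U be integers with 2 ≤ S ≤ K and 1 ≤ U ≤ K−1, let 𝒰 be a U-element subset of [K] = {1,…,K}, and let u ∈ [K] \ 𝒰. Let 𝒞 be the collection of all S-element subsets V of [K] with u ∈ V and V ∩ 𝒰 ≠ ∅, and set N = C(K−1, S−1) − C(K−1−U, S−1). Then there exists a function x assigning a natural number x(V, k) to each pair (V, k) with V ∈ 𝒞 and k ∈ 𝒰, such that: (i) x(V, k) = 0 whenever k ∉ V; (ii) for every k ∈ 𝒰, Σ_{V ∈ 𝒞} x(V, k) = N; and (iii) for every V ∈ 𝒞, Σ_{k ∈ 𝒰} x(V, k) = U. -/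
/-!
Let `σ` permute the colors in `s = 𝒰` cyclically and fix everything else; it then permutes the
urns. Choose a color `f V ∈ V ∩ s` for every urn `V`. In round `i < #s`, put into each urn `V` one
ball of the color that `σ ^ i` sends to the color chosen for `σ ^ i V`. Every urn receives one ball
per round. For a color `k`, reindexing each round by `W = σ ^ i V` leaves the pairs `(i, W)` with
`σ ^ i k = f W`, and every urn `W` has exactly one such `i`; hence `k` is used as many times as
there are urns.
-/

open Finset

section RotatedAssignment

variable {α β : Type*} [DecidableEq α] {σ : Equiv.Perm α} {τ : β → β} {s : Finset α}
  {C : Finset β} {f : β → α}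

/-- The number of balls of color `a` in urn `b` after `n` rounds, when the ball put into `b` in round
`i` has the color `σ ^ (-i) (f (τ ^ i b))`. -/
def rotatedAssignment (σ : Equiv.Perm α) (τ : β → β) (f : β → α) (n : ℕ) (b : β) (a : α) : ℕ :=
  #{i ∈ range n | (σ ^ i) a = f (τ^[i] b)}

lemma rotatedAssignment_eq_zero {r : β → α → Prop} (hτ : Set.MapsTo τ C C)
    (hf : ∀ b ∈ C, r b (f b)) (hr : ∀ b a, r (τ b) (σ a) → r b a) (n : ℕ) {b : β} (hb : b ∈ C)
    {a : α} (hba : ¬ r b a) : rotatedAssignment σ τ f n b a = 0 := by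
  have hr_iterate (i : ℕ) : ∀ b a, r (τ^[i] b) ((σ ^ i) a) → r b a := by
    induction i with
    | zero => exact fun _ _ h => h
    | succ i ih => exact fun b a h => hr b a (ih _ _ h)
  refine card_eq_zero.2 (filter_eq_empty_iff.2 fun i _ hi => hba (hr_iterate i b a ?_))
  rw [hi]
  exact hf _ (hτ.iterate i hb)

lemma sum_colors_rotatedAssignment (hσ : Set.BijOn σ s s) (hτ : Set.MapsTo τ C C)
    (hf : Set.MapsTo f C s) (n : ℕ) {b : β} (hb : b ∈ C) :
    ∑ a ∈ s, rotatedAssignment σ τ f n b a = n := by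
  have unique_color (i : ℕ) : #{a ∈ s | (σ ^ i) a = f (τ^[i] b)} = 1 := by
    obtain ⟨a, ha, hai⟩ := (hσ.perm_pow i).surjOn (hf (hτ.iterate i hb))
    refine card_eq_one.2 ⟨a, ext fun a' => ?_⟩
    rw [mem_filter, mem_singleton, ← hai, (σ ^ i).apply_eq_iff_eq]
    exact ⟨And.right, fun h => ⟨h ▸ ha, h⟩⟩
  calc ∑ a ∈ s, #{i ∈ range n | (σ ^ i) a = f (τ^[i] b)}
      = ∑ i ∈ range n, #{a ∈ s | (σ ^ i) a = f (τ^[i] b)} :=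
        sum_card_bipartiteAbove_eq_sum_card_bipartiteBelow _
    _ = n := by simp only [unique_color, sum_const, card_range, smul_eq_mul, mul_one]

lemma card_filter_pow_apply_eq (hσ : σ.IsCycleOn s) {a b : α} (ha : a ∈ s) (hb : b ∈ s) :
    #{i ∈ range #s | (σ ^ i) a = b} = 1 := by
  obtain ⟨j, hj, rfl⟩ := hσ.exists_pow_eq ha hb
  refine card_eq_one.2 ⟨j, ext fun i => ?_⟩
  rw [mem_filter, mem_range, mem_singleton, hσ.pow_apply_eq_pow_apply ha]
  refine ⟨fun ⟨hi, hij⟩ => hij.eq_of_lt_of_lt hi hj, ?_⟩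
  rintro rfl
  exact ⟨hj, rfl⟩

lemma sum_urns_rotatedAssignment (hσ : σ.IsCycleOn s) (hτ : Set.BijOn τ C C)
    (hf : Set.MapsTo f C s) {a : α} (ha : a ∈ s) :
    ∑ b ∈ C, rotatedAssignment σ τ f #s b a = #C := by
  have reindex (i : ℕ) : #{b ∈ C | (σ ^ i) a = f (τ^[i] b)} = #{b ∈ C | (σ ^ i) a = f b} := by
    have hτi := hτ.iterate i
    simp only [card_filter]
    exact sum_nbij τ^[i] hτi.mapsTo hτi.injOn hτi.surjOn fun _ _ => rfl
  calc ∑ b ∈ C, #{i ∈ range #s | (σ ^ i) a = f (τ^[i] b)}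
      = ∑ i ∈ range #s, #{b ∈ C | (σ ^ i) a = f (τ^[i] b)} :=
        sum_card_bipartiteAbove_eq_sum_card_bipartiteBelow _
    _ = ∑ i ∈ range #s, #{b ∈ C | (σ ^ i) a = f b} := sum_congr rfl fun i _ => reindex i
    _ = ∑ b ∈ C, #{i ∈ range #s | (σ ^ i) a = f b} :=
        (sum_card_bipartiteAbove_eq_sum_card_bipartiteBelow _).symm
    _ = ∑ b ∈ C, 1 := sum_congr rfl fun b hb => card_filter_pow_apply_eq hσ ha (hf hb)
    _ = #C := (card_eq_sum_ones C).symm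

end RotatedAssignment

section Urns

variable {α : Type*} [DecidableEq α] {A s : Finset α} {u : α} {n : ℕ}

/-- The collection `𝒞` of urns: the `n`-element subsets of `A` that contain `u` and meet `s`. -/
def urns (A s : Finset α) (u : α) (n : ℕ) : Finset (Finset α) :=
  {V ∈ A.powersetCard n | u ∈ V ∧ (V ∩ s).Nonempty}

lemma urns_eq_sdiff :
    urns A s u n =
      {V ∈ A.powersetCard n | {u} ⊆ V} \ {V ∈ (A \ s).powersetCard n | {u} ⊆ V} := by
  ext V
  simp only [urns, mem_filter, mem_sdiff, mem_powersetCard, singleton_subset_iff, subset_sdiff,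
    ← not_disjoint_iff_nonempty_inter]
  tauto

lemma card_urns (hs : s ⊆ A) (hu : u ∈ A) (hus : u ∉ s) (hn : 1 ≤ n) :
    #(urns A s u n) = (#A - 1).choose (n - 1) - (#A - 1 - #s).choose (n - 1) := by
  have hsub : {V ∈ (A \ s).powersetCard n | {u} ⊆ V} ⊆ {V ∈ A.powersetCard n | {u} ⊆ V} :=
    filter_subset_filter _ (powersetCard_mono sdiff_subset)
  have huA : {u} ⊆ A := singleton_subset_iff.2 hu
  have huAs : {u} ⊆ A \ s := singleton_subset_iff.2 (mem_sdiff.2 ⟨hu, hus⟩)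
  rw [urns_eq_sdiff, card_sdiff_of_subset hsub, card_filter_powersetCard_subset _ _ _ huA hn,
    card_filter_powersetCard_subset _ _ _ huAs hn, card_singleton, card_sdiff_of_subset hs,
    Nat.sub_right_comm]

lemma bijOn_map_urns {σ : Equiv.Perm α} (hs : s ⊆ A) (hus : u ∉ s) (hσ : {a | σ a ≠ a} ⊆ s) :
    Set.BijOn (Finset.map σ.toEmbedding) (urns A s u n) (urns A s u n) := by
  have hmaps : Set.MapsTo (Finset.map σ.toEmbedding) (urns A s u n) (urns A s u n) := by
    intro V hV
    obtain ⟨hVA, huV, hVs⟩ := mem_filter.1 hV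
    rw [mem_powersetCard] at hVA
    have hσA : A.map σ.toEmbedding = A := map_perm (hσ.trans hs)
    have hσs : s.map σ.toEmbedding = s := map_perm hσ
    have hσu : σ u = u := not_not.1 fun h => hus (hσ h)
    refine mem_filter.2 ⟨mem_powersetCard.2 ⟨?_, (card_map _).trans hVA.2⟩, ?_, ?_⟩
    · exact hσA ▸ map_subset_map.2 hVA.1
    · exact mem_map.2 ⟨u, huV, hσu⟩
    · rw [← hσs, ← map_inter]
      exact hVs.map
  have hinj := (map_injective σ.toEmbedding).injOn (s := urns A s u n)
  exact ⟨hmaps, hinj, surjOn_of_injOn_of_card_le _ hmaps hinj le_rfl⟩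

end Urns

theorem balls_into_urns_general {α : Type*} [DecidableEq α] {A s : Finset α} {u : α} {n : ℕ}
    (hs : s ⊆ A) (hu : u ∈ A) (hus : u ∉ s) (hn : 1 ≤ n) :
    ∃ x : Finset α → α → ℕ,
      (∀ V ∈ urns A s u n, ∀ k ∈ s, k ∉ V → x V k = 0) ∧
      (∀ k ∈ s, ∑ V ∈ urns A s u n, x V k =
        (#A - 1).choose (n - 1) - (#A - 1 - #s).choose (n - 1)) ∧
      (∀ V ∈ urns A s u n, ∑ k ∈ s, x V k = #s) := by
  obtain ⟨σ, hcycle, hsupport⟩ := (countable_toSet s).exists_cycleOn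
  have hmap := bijOn_map_urns (n := n) hs hus hsupport
  have : Nonempty α := ⟨u⟩
  have hmeets : ∀ V ∈ urns A s u n, ∃ k, k ∈ V ∩ s := fun V hV => (mem_filter.1 hV).2.2
  choose! f hf using hmeets
  have hfV : ∀ V ∈ urns A s u n, f V ∈ V := fun V hV => mem_of_mem_inter_left (hf V hV)
  have hfs : Set.MapsTo f (urns A s u n) s := fun V hV => mem_of_mem_inter_right (hf V hV)
  rw [← card_urns hs hu hus hn]
  exact ⟨rotatedAssignment σ (Finset.map σ.toEmbedding) f #s,
    fun V hV k _ => rotatedAssignment_eq_zero (r := fun V k => k ∈ V) hmap.mapsTo hfV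
      (fun _ _ => (mem_map' _).1) _ hV,
    fun k hk => sum_urns_rotatedAssignment hcycle hmap hfs hk,
    fun V hV => sum_colors_rotatedAssignment hcycle.1 hmap.mapsTo hfs _ hV⟩

/-- The balls-into-urns problem (p1): urns are the `S`-element subsets `V` of `[K]` with
`u ∈ V` and `V ∩ 𝒰 ≠ ∅`, ball colors are the elements `k ∈ 𝒰`, each color has
`N = C(K−1,S−1) − C(K−1−U,S−1)` balls, a ball of color `k` may only go into an urn `V`
with `k ∈ V`, and every urn receives exactly `U` balls. -/
theorem balls_into_urns (K S U : ℕ) (hS : 2 ≤ S) (hSK : S ≤ K)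
    (hU : 1 ≤ U) (hUK : U ≤ K - 1)
    (𝒰 : Finset ℕ) (h𝒰 : 𝒰 ⊆ Finset.Icc 1 K) (h𝒰card : 𝒰.card = U)
    (u : ℕ) (hu : u ∈ Finset.Icc 1 K) (hu𝒰 : u ∉ 𝒰) :
    ∃ x : Finset ℕ → ℕ → ℕ,
      (∀ V ∈ (((Finset.Icc 1 K).powersetCard S).filter
          (fun V => u ∈ V ∧ (V ∩ 𝒰).Nonempty)), ∀ k ∈ 𝒰, k ∉ V → x V k = 0) ∧
      (∀ k ∈ 𝒰, ∑ V ∈ (((Finset.Icc 1 K).powersetCard S).filter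
          (fun V => u ∈ V ∧ (V ∩ 𝒰).Nonempty)), x V k =
            (K - 1).choose (S - 1) - (K - 1 - U).choose (S - 1)) ∧
      (∀ V ∈ (((Finset.Icc 1 K).powersetCard S).filter
          (fun V => u ∈ V ∧ (V ∩ 𝒰).Nonempty)), ∑ k ∈ 𝒰, x V k = U) := by
  simpa [urns, h𝒰card] using balls_into_urns_general h𝒰 hu hu𝒰 (one_le_two.trans hS)
end

section
/- Let W, X, Z be random variables such that W and Z are independent, I[X : W] = 0, and H[W | (X, Z)] = 0. Then I[X : Z | W] ≥ H[W]. -/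
open MeasureTheory ProbabilityTheory

/-- Shannon entropy `H[X]` of a random variable `X` valued in a finite type. -/
noncomputable def entropy {Ω S : Type*} [MeasurableSpace Ω] [Fintype S] [MeasurableSpace S]
    (μ : Measure Ω) (X : Ω → S) : ℝ :=
  ∑ s : S, Real.negMulLog ((μ.map X) {s}).toReal

/-- Conditional entropy `H[X | Y] = H[(X, Y)] − H[Y]`. -/
noncomputable def condEntropy {Ω S T : Type*} [MeasurableSpace Ω]
    [Fintype S] [MeasurableSpace S] [Fintype T] [MeasurableSpace T]
    (μ : Measure Ω) (X : Ω → S) (Y : Ω → T) : ℝ :=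
  entropy μ (fun ω => (X ω, Y ω)) - entropy μ Y

/-- Mutual information `I[X : Y] = H[X] + H[Y] − H[(X, Y)]`. -/
noncomputable def mutualInfo {Ω S T : Type*} [MeasurableSpace Ω]
    [Fintype S] [MeasurableSpace S] [Fintype T] [MeasurableSpace T]
    (μ : Measure Ω) (X : Ω → S) (Y : Ω → T) : ℝ :=
  entropy μ X + entropy μ Y - entropy μ (fun ω => (X ω, Y ω))

/-- Conditional mutual information
`I[X : Y | Z] = H[(X, Z)] + H[(Y, Z)] − H[(X, Y, Z)] − H[Z]`. -/
noncomputable def condMutualInfo {Ω S T U : Type*} [MeasurableSpace Ω]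
    [Fintype S] [MeasurableSpace S] [Fintype T] [MeasurableSpace T]
    [Fintype U] [MeasurableSpace U]
    (μ : Measure Ω) (X : Ω → S) (Y : Ω → T) (Z : Ω → U) : ℝ :=
  entropy μ (fun ω => (X ω, Z ω)) + entropy μ (fun ω => (Y ω, Z ω)) -
    entropy μ (fun ω => (X ω, Y ω, Z ω)) - entropy μ Z

/-!
Expanding every quantity into joint entropies gives
`I[X : Z | W] = I[X : Z] - I[X : W] - I[Z : W] + H[W] - H[W | (X, Z)]`.
Mutual information is the Kullback–Leibler divergence of the joint law from the product of the
marginals, so it is nonnegative and vanishes for independent variables.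
-/

open InformationTheory

section FiniteMeasures

variable {S T : Type*} [MeasurableSpace S] [MeasurableSingletonClass S]
  [MeasurableSpace T] [MeasurableSingletonClass T]

lemma rnDeriv_toReal_mul_measureReal_singleton {μ ν : Measure S}
    [μ.HaveLebesgueDecomposition ν] (hμν : μ ≪ ν) (x : S) :
    (μ.rnDeriv ν x).toReal * ν.real {x} = μ.real {x} := by
  rw [measureReal_def, measureReal_def, ← ENNReal.toReal_mul, ← lintegral_singleton,
    Measure.setLIntegral_rnDeriv' hμν (measurableSet_singleton x)]

lemma llr_ae_eq_log_sub_log [Countable S] {μ ν : Measure S} [IsFiniteMeasure μ]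
    [IsFiniteMeasure ν] (hμν : μ ≪ ν) :
    llr μ ν =ᵐ[μ] fun x ↦ Real.log (μ.real {x}) - Real.log (ν.real {x}) := by
  refine ae_iff_of_countable.2 fun x hx ↦ ?_
  have hμx : μ.real {x} ≠ 0 := (measureReal_ne_zero_iff).2 hx
  have hνx : ν.real {x} ≠ 0 := (measureReal_ne_zero_iff).2 fun h ↦ hx (hμν h)
  beta_reduce
  rw [← Real.log_div hμx hνx, ← rnDeriv_toReal_mul_measureReal_singleton hμν x,
    mul_div_cancel_right₀ _ hνx, llr]

lemma absolutelyContinuous_fst_prod_snd [Countable S] [Countable T] (ρ : Measure (S × T))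
    [SFinite ρ] : ρ ≪ ρ.fst.prod ρ.snd := by
  intro s hs
  rw [measure_null_iff_singleton s.to_countable] at hs ⊢
  rintro ⟨x, y⟩ hxy
  have hxy' := hs _ hxy
  rw [← Set.singleton_prod_singleton, Measure.prod_prod, mul_eq_zero,
    Measure.fst_apply (measurableSet_singleton x),
    Measure.snd_apply (measurableSet_singleton y)] at hxy'
  rcases hxy' with hx | hy
  · exact measure_mono_null (by simp) hx
  · exact measure_mono_null (by simp) hy

lemma llr_fst_prod_snd_ae_eq [Countable S] [Countable T] (ρ : Measure (S × T))
    [IsFiniteMeasure ρ] :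
    llr ρ (ρ.fst.prod ρ.snd) =ᵐ[ρ] fun p ↦ Real.log (ρ.real {p}) -
      (Real.log (ρ.fst.real {p.1}) + Real.log (ρ.snd.real {p.2})) := by
  have hρ := absolutelyContinuous_fst_prod_snd ρ
  filter_upwards [llr_ae_eq_log_sub_log hρ, ae_iff_of_countable.2 fun _ h ↦ h] with p hllr hp
  have hmul : (ρ.fst.prod ρ.snd).real {p} = ρ.fst.real {p.1} * ρ.snd.real {p.2} := by
    rw [← measureReal_prod_prod, Set.singleton_prod_singleton]
  have hne : ρ.fst.real {p.1} * ρ.snd.real {p.2} ≠ 0 :=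
    hmul ▸ (measureReal_ne_zero_iff).2 fun h ↦ hp (hρ h)
  rw [hllr, hmul, Real.log_mul (left_ne_zero_of_mul hne) (right_ne_zero_of_mul hne)]

lemma integrable_comp_of_finite {Ω : Type*} [MeasurableSpace Ω] {μ : Measure Ω}
    [IsFiniteMeasure μ] [Finite S] {X : Ω → S} (hX : AEMeasurable X μ) (f : S → ℝ) :
    Integrable (fun ω ↦ f (X ω)) μ :=
  Integrable.of_finite.comp_aemeasurable hX

end FiniteMeasures

section Entropy

variable {Ω S T U : Type*} [MeasurableSpace Ω] {μ : Measure Ω}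
  [Fintype S] [MeasurableSpace S] [MeasurableSingletonClass S]
  [Fintype T] [MeasurableSpace T] [MeasurableSingletonClass T]
  [Fintype U] [MeasurableSpace U] [MeasurableSingletonClass U]
  {X : Ω → S} {Y : Ω → T} {Z : Ω → U}

lemma entropy_eq_neg_integral_log [IsFiniteMeasure μ] (hX : AEMeasurable X μ) :
    entropy μ X = -∫ ω, Real.log ((μ.map X).real {X ω}) ∂μ := by
  rw [← integral_map hX (f := fun s ↦ Real.log ((μ.map X).real {s}))
      (measurable_of_finite _).aestronglyMeasurable,
    integral_fintype .of_finite, ← Finset.sum_neg_distrib]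
  simp only [entropy, Real.negMulLog, measureReal_def, smul_eq_mul, neg_mul]

lemma entropy_comp_of_injective [IsFiniteMeasure μ] (hX : AEMeasurable X μ) {f : S → T}
    (hf : f.Injective) : entropy μ (fun ω ↦ f (X ω)) = entropy μ X := by
  have hfm : Measurable f := measurable_of_finite f
  have hfX : AEMeasurable (fun ω ↦ f (X ω)) μ := hfm.comp_aemeasurable hX
  have hmass (s : S) : (μ.map fun ω ↦ f (X ω)).real {f s} = (μ.map X).real {s} := by
    rw [← Function.comp_def, ← AEMeasurable.map_map_of_aemeasurable hfm.aemeasurable hX,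
      map_measureReal_apply hfm (measurableSet_singleton _), ← Set.image_singleton,
      hf.preimage_image]
  rw [entropy_eq_neg_integral_log hX, entropy_eq_neg_integral_log hfX]
  simp only [hmass]

lemma mutualInfo_eq_toReal_klDiv [IsProbabilityMeasure μ] (hX : AEMeasurable X μ)
    (hY : AEMeasurable Y μ) :
    mutualInfo μ X Y =
      (klDiv (μ.map fun ω ↦ (X ω, Y ω)) ((μ.map X).prod (μ.map Y))).toReal := by
  have hXY := hX.prodMk hY
  set ρ := μ.map fun ω ↦ (X ω, Y ω) with hρ
  have : IsProbabilityMeasure ρ := Measure.isProbabilityMeasure_map hXY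
  have hfst : ρ.fst = μ.map X := Measure.fst_map_prodMk₀ hY
  have hsnd : ρ.snd = μ.map Y := Measure.snd_map_prodMk₀ hX
  have hlogX := integrable_comp_of_finite hX fun s ↦ Real.log ((μ.map X).real {s})
  have hlogY := integrable_comp_of_finite hY fun t ↦ Real.log ((μ.map Y).real {t})
  have hlogXY := integrable_comp_of_finite hXY fun p ↦ Real.log (ρ.real {p})
  symm
  calc (klDiv ρ ((μ.map X).prod (μ.map Y))).toReal
      = ∫ p, llr ρ (ρ.fst.prod ρ.snd) p ∂ρ := by
        rw [← hfst, ← hsnd, toReal_klDiv_of_measure_eq (absolutelyContinuous_fst_prod_snd ρ)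
          (by simp only [measure_univ])]
    _ = ∫ p, (Real.log (ρ.real {p}) -
          (Real.log (ρ.fst.real {p.1}) + Real.log (ρ.snd.real {p.2}))) ∂ρ :=
        integral_congr_ae (llr_fst_prod_snd_ae_eq ρ)
    _ = ∫ ω, (Real.log (ρ.real {(X ω, Y ω)}) -
          (Real.log ((μ.map X).real {X ω}) + Real.log ((μ.map Y).real {Y ω}))) ∂μ := by
        rw [hfst, hsnd, hρ, integral_map hXY (measurable_of_finite _).aestronglyMeasurable]
    _ = mutualInfo μ X Y := by
        rw [integral_sub hlogXY (hlogX.fun_add hlogY), integral_add hlogX hlogY, mutualInfo,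
          entropy_eq_neg_integral_log hX, entropy_eq_neg_integral_log hY,
          entropy_eq_neg_integral_log hXY]
        ring

lemma mutualInfo_nonneg [IsProbabilityMeasure μ] (hX : AEMeasurable X μ)
    (hY : AEMeasurable Y μ) : 0 ≤ mutualInfo μ X Y :=
  mutualInfo_eq_toReal_klDiv hX hY ▸ ENNReal.toReal_nonneg

lemma mutualInfo_eq_zero_of_indepFun [IsProbabilityMeasure μ] (hX : AEMeasurable X μ)
    (hY : AEMeasurable Y μ) (hXY : IndepFun X Y μ) : mutualInfo μ X Y = 0 := by
  rw [mutualInfo_eq_toReal_klDiv hX hY, hXY.map_prod_eq_prod_map_map hX hY, klDiv_self,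
    ENNReal.toReal_zero]

lemma condMutualInfo_eq_mutualInfo_sub_add_entropy_sub [IsFiniteMeasure μ] (hX : AEMeasurable X μ)
    (hY : AEMeasurable Y μ) (hZ : AEMeasurable Z μ) :
    condMutualInfo μ X Y Z = mutualInfo μ X Y - mutualInfo μ X Z - mutualInfo μ Y Z +
      entropy μ Z - condEntropy μ Z (fun ω ↦ (X ω, Y ω)) := by
  have hrotate : entropy μ (fun ω ↦ (X ω, Y ω, Z ω)) = entropy μ (fun ω ↦ (Z ω, X ω, Y ω)) :=
    entropy_comp_of_injective (hZ.prodMk (hX.prodMk hY))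
      ((Equiv.prodComm U (S × T)).trans (Equiv.prodAssoc S T U)).injective
  unfold condMutualInfo mutualInfo condEntropy
  linarith

theorem condMutualInfo_ge_entropy_general [IsProbabilityMeasure μ] (hX : AEMeasurable X μ)
    (hY : AEMeasurable Y μ) (hZ : AEMeasurable Z μ) :
    condMutualInfo μ X Y Z ≥ entropy μ Z - mutualInfo μ X Z - mutualInfo μ Y Z -
      condEntropy μ Z (fun ω ↦ (X ω, Y ω)) := by
  linarith [condMutualInfo_eq_mutualInfo_sub_add_entropy_sub hX hY hZ, mutualInfo_nonneg hX hY]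

end Entropy

/-- If `W` and `Z` are independent, `I[X : W] = 0` and `H[W | (X, Z)] = 0`, then
`I[X : Z | W] ≥ H[W]`. -/
theorem condMutualInfo_ge_entropy
    {Ω A B C : Type*} [MeasurableSpace Ω] (μ : Measure Ω) [IsProbabilityMeasure μ]
    [Fintype A] [MeasurableSpace A] [MeasurableSingletonClass A]
    [Fintype B] [MeasurableSpace B] [MeasurableSingletonClass B]
    [Fintype C] [MeasurableSpace C] [MeasurableSingletonClass C]
    (W : Ω → A) (X : Ω → B) (Z : Ω → C)
    (hW : Measurable W) (hX : Measurable X) (hZ : Measurable Z)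
    (hWZ : IndepFun W Z μ)
    (hsec : mutualInfo μ X W = 0)
    (hdec : condEntropy μ W (fun ω => (X ω, Z ω)) = 0) :
    condMutualInfo μ X Z W ≥ entropy μ W := by
  have hZW := mutualInfo_eq_zero_of_indepFun hZ.aemeasurable hW.aemeasurable hWZ.symm
  simpa only [hsec, hZW, hdec, sub_zero] using
    condMutualInfo_ge_entropy_general (μ := μ) hX.aemeasurable hZ.aemeasurable hW.aemeasurable
end
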